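/- arXiv:2002.09795 — 2 statements merged into one kernel-verified Lean document; each statement's English description precedes it below -/
import Mathlib

section
/- Let Q_0, Q_1, …, Q_T : Ω → (S×A → ℝ) (T ≥ 1) be random functions and ε ≥ 0 be such that 𝔼[‖Q_i − 𝒯Q_{i−1}‖₂²] ≤ ε for every i ∈ {1,…,T}. Then 𝔼[‖Q_T − Q*‖_∞²] ≤ ((1+γ²)/(1−γ²)) · ε · (2/(1−γ²)) + ((γ²+1)/2)^T · 𝔼[‖Q_0 − Q*‖_∞²]. -/
open MeasureTheory ProbabilityTheory Finset

/-- sup norm of a real function on a finite nonempty type. -/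
noncomputable def supNorm {ι : Type*} [Fintype ι] [Nonempty ι] (f : ι → ℝ) : ℝ :=
  Finset.univ.sup' Finset.univ_nonempty (fun i => |f i|)

/-- squared Euclidean norm of a real function on a finite type. -/
def sqNorm {ι : Type*} [Fintype ι] (f : ι → ℝ) : ℝ := ∑ i, (f i) ^ 2

/-- Bellman optimality operator. -/
noncomputable def bellman {S A : Type*} [Fintype S] [Fintype A] [Nonempty A]
    (P : S → A → S → ℝ) (r : S → A → ℝ) (γ : ℝ) (Q : S × A → ℝ) : S × A → ℝ :=
  fun x => r x.1 x.2 + γ * ∑ s' : S, P x.1 x.2 s' *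
    Finset.univ.sup' Finset.univ_nonempty (fun a' => Q (s', a'))

/-!
Since `𝒯` contracts towards `Q*`, the triangle inequality through `𝒯 Q_k` gives
`‖Q_{k+1} - Q*‖_∞ ≤ ‖Q_{k+1} - 𝒯 Q_k‖_∞ + γ ‖Q_k - Q*‖_∞`. Young's inequality, weighted so that the
coefficient of the squared last term is `q = (γ² + 1) / 2`, halfway between `γ²` and `1`, turns this
into an affine recursion for `𝔼 ‖Q_k - Q*‖_∞²`; summing the geometric series of ratio `q` produces
the factor `1 / (1 - q) = 2 / (1 - γ²)`.
-/

section Recursion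

lemma le_div_one_sub_add_pow_mul {u : ℕ → ℝ} {b q : ℝ} (hb : 0 ≤ b) (hq₀ : 0 ≤ q) (hq₁ : q < 1)
    {n : ℕ} (hu : ∀ k < n, u (k + 1) ≤ b + q * u k) :
    u n ≤ b / (1 - q) + q ^ n * u 0 := by
  have hq : 0 < 1 - q := sub_pos.2 hq₁
  have fixed_point : b / (1 - q) = b + q * (b / (1 - q)) := by field_simp; ring
  have geometric : u n - b / (1 - q) ≤ q ^ n * (u 0 - b / (1 - q)) :=
    le_geom (u := fun k => u k - b / (1 - q)) hq₀ n fun k hk => by linarith [hu k hk]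
  have : 0 ≤ q ^ n * (b / (1 - q)) := by positivity
  linarith

lemma add_mul_sq_le_of_sq_lt_one {γ : ℝ} (hγ : γ ^ 2 < 1) (a b : ℝ) :
    (a + γ * b) ^ 2 ≤ (1 + γ ^ 2) / (1 - γ ^ 2) * a ^ 2 + (γ ^ 2 + 1) / 2 * b ^ 2 := by
  have : 0 < 1 - γ ^ 2 := sub_pos.2 hγ
  have gap_eq : (1 + γ ^ 2) / (1 - γ ^ 2) * a ^ 2 + (γ ^ 2 + 1) / 2 * b ^ 2 - (a + γ * b) ^ 2 =
      (2 * γ * a - (1 - γ ^ 2) * b) ^ 2 / (2 * (1 - γ ^ 2)) := by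
    field_simp
    ring
  rw [← sub_nonneg, gap_eq]
  positivity

variable {E Ω : Type*} [PseudoMetricSpace E] [MeasurableSpace Ω] {μ : Measure Ω} {z : E} {γ : ℝ}

lemma sq_dist_le_of_dist_le_mul (hγ : γ ^ 2 < 1) {w x y : E} (hy : dist y z ≤ γ * dist w z) :
    dist x z ^ 2 ≤
      (1 + γ ^ 2) / (1 - γ ^ 2) * dist x y ^ 2 + (γ ^ 2 + 1) / 2 * dist w z ^ 2 :=
  calc dist x z ^ 2 ≤ (dist x y + γ * dist w z) ^ 2 := by
        gcongr
        linarith [dist_triangle x y z]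
    _ ≤ _ := add_mul_sq_le_of_sq_lt_one hγ _ _

lemma integral_sq_dist_le_of_dist_le_mul (hγ : γ ^ 2 < 1) {w x y : Ω → E} {ρ : Ω → ℝ}
    (hy : ∀ ω, dist (y ω) z ≤ γ * dist (w ω) z) (hρ : ∀ ω, dist (x ω) (y ω) ^ 2 ≤ ρ ω)
    (hρint : Integrable ρ μ) (hw : Integrable (fun ω => dist (w ω) z ^ 2) μ)
    (hx : Integrable (fun ω => dist (x ω) z ^ 2) μ) :
    ∫ ω, dist (x ω) z ^ 2 ∂μ ≤
      (1 + γ ^ 2) / (1 - γ ^ 2) * ∫ ω, ρ ω ∂μ + (γ ^ 2 + 1) / 2 * ∫ ω, dist (w ω) z ^ 2 ∂μ := by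
  have : 0 < 1 - γ ^ 2 := sub_pos.2 hγ
  rw [← integral_const_mul, ← integral_const_mul,
    ← integral_add (hρint.const_mul _) (hw.const_mul _)]
  refine integral_mono hx ((hρint.const_mul _).add (hw.const_mul _)) fun ω => ?_
  refine (sq_dist_le_of_dist_le_mul hγ (hy ω)).trans ?_
  gcongr
  exact hρ ω

theorem squared_error_recursion_accumulated_general {F : E → E} (hγ : γ ^ 2 < 1)
    (hF : ∀ x, dist (F x) z ≤ γ * dist x z) {T : ℕ} {X : ℕ → Ω → E} {ρ : ℕ → Ω → ℝ}
    {ε : ℝ} (hε : 0 ≤ ε) (hρ : ∀ k < T, ∀ ω, dist (X (k + 1) ω) (F (X k ω)) ^ 2 ≤ ρ k ω)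
    (hρint : ∀ k < T, Integrable (ρ k) μ) (hρε : ∀ k < T, ∫ ω, ρ k ω ∂μ ≤ ε)
    (hX : ∀ k ≤ T, Integrable (fun ω => dist (X k ω) z ^ 2) μ) :
    ∫ ω, dist (X T ω) z ^ 2 ∂μ ≤ (1 + γ ^ 2) / (1 - γ ^ 2) * ε * (2 / (1 - γ ^ 2)) +
      ((γ ^ 2 + 1) / 2) ^ T * ∫ ω, dist (X 0 ω) z ^ 2 ∂μ := by
  have : 0 < 1 - γ ^ 2 := sub_pos.2 hγ
  have one_step : ∀ k < T, ∫ ω, dist (X (k + 1) ω) z ^ 2 ∂μ ≤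
      (1 + γ ^ 2) / (1 - γ ^ 2) * ε + (γ ^ 2 + 1) / 2 * ∫ ω, dist (X k ω) z ^ 2 ∂μ := by
    intro k hk
    refine (integral_sq_dist_le_of_dist_le_mul hγ (fun ω => hF (X k ω)) (hρ k hk) (hρint k hk)
      (hX k hk.le) (hX (k + 1) hk)).trans ?_
    gcongr
    exact hρε k hk
  have accumulated := le_div_one_sub_add_pow_mul (u := fun k => ∫ ω, dist (X k ω) z ^ 2 ∂μ)
    (by positivity) (by positivity) (by linarith) one_step
  have series_sum : 1 - (γ ^ 2 + 1) / 2 = (1 - γ ^ 2) / 2 := by ring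
  rwa [series_sum, div_eq_mul_inv, inv_div] at accumulated

end Recursion

section FiniteNorms

variable {ι : Type*} [Fintype ι]

lemma supNorm_eq_norm [Nonempty ι] (f : ι → ℝ) : supNorm f = ‖f‖ :=
  le_antisymm (sup'_le _ _ fun i _ => norm_le_pi_norm f i)
    ((pi_norm_le_iff_of_nonempty f).2 fun i => le_sup' (fun i => |f i|) (mem_univ i))

lemma supNorm_sub_eq_dist [Nonempty ι] (f g : ι → ℝ) :
    supNorm (fun i => f i - g i) = dist f g := by
  rw [supNorm_eq_norm, dist_eq_norm]
  rfl

lemma sq_norm_le_sqNorm (f : ι → ℝ) : ‖f‖ ^ 2 ≤ sqNorm f := by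
  have sqNorm_nonneg : 0 ≤ sqNorm f := sum_nonneg fun i _ => sq_nonneg (f i)
  refine (Real.le_sqrt (norm_nonneg f) sqNorm_nonneg).1 ?_
  refine (pi_norm_le_iff_of_nonneg (Real.sqrt_nonneg _)).2 fun i => Real.abs_le_sqrt ?_
  exact single_le_sum (f := fun i => f i ^ 2) (fun i _ => sq_nonneg (f i)) (mem_univ i)

end FiniteNorms

section Nonexpansive

variable {ι : Type*} {s : Finset ι} {M : ℝ}

lemma sup'_le_sup'_add (hs : s.Nonempty) {f g : ι → ℝ} (h : ∀ i ∈ s, f i ≤ g i + M) :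
    s.sup' hs f ≤ s.sup' hs g + M :=
  sup'_le _ _ fun i hi => (h i hi).trans (by gcongr; exact le_sup' g hi)

lemma dist_sup'_le (hs : s.Nonempty) {f g : ι → ℝ} (h : ∀ i ∈ s, dist (f i) (g i) ≤ M) :
    dist (s.sup' hs f) (s.sup' hs g) ≤ M := by
  simp only [Real.dist_eq, abs_sub_le_iff, sub_le_iff_le_add'] at h ⊢
  exact ⟨sup'_le_sup'_add hs fun i hi => (h i hi).1, sup'_le_sup'_add hs fun i hi => (h i hi).2⟩

lemma dist_sum_smul_le {E : Type*} [SeminormedAddCommGroup E] [NormedSpace ℝ E] {p : ι → ℝ}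
    (hp₀ : ∀ i ∈ s, 0 ≤ p i) (hp₁ : ∑ i ∈ s, p i = 1) {f g : ι → E}
    (h : ∀ i ∈ s, dist (f i) (g i) ≤ M) :
    dist (∑ i ∈ s, p i • f i) (∑ i ∈ s, p i • g i) ≤ M :=
  calc dist (∑ i ∈ s, p i • f i) (∑ i ∈ s, p i • g i)
      ≤ ∑ i ∈ s, p i * M := dist_sum_sum_le_of_le s fun i hi => by
        rw [dist_smul₀, Real.norm_of_nonneg (hp₀ i hi)]
        exact mul_le_mul_of_nonneg_left (h i hi) (hp₀ i hi)
    _ = M := by rw [← sum_mul, hp₁, one_mul]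

end Nonexpansive

lemma dist_bellman_le {S A : Type*} [Fintype S] [Fintype A] [Nonempty A] {P : S → A → S → ℝ}
    (hP₀ : ∀ s a s', 0 ≤ P s a s') (hP₁ : ∀ s a, ∑ s', P s a s' = 1) (r : S → A → ℝ)
    {γ : ℝ} (hγ : 0 ≤ γ) (Q R : S × A → ℝ) :
    dist (bellman P r γ Q) (bellman P r γ R) ≤ γ * dist Q R := by
  refine (dist_pi_le_iff (by positivity)).2 fun ⟨s, a⟩ => ?_
  simp only [bellman, dist_add_left]
  rw [← smul_eq_mul, ← smul_eq_mul γ, dist_smul₀, Real.norm_of_nonneg hγ]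
  gcongr
  exact dist_sum_smul_le (fun s' _ => hP₀ s a s') (hP₁ s a) fun s' _ =>
    dist_sup'_le univ_nonempty fun a' _ => dist_le_pi_dist Q R (s', a')

theorem squared_error_recursion_accumulated
    {S A : Type*} [Fintype S] [Fintype A] [Nonempty S] [Nonempty A]
    {Ω : Type*} [MeasurableSpace Ω] (μ : Measure Ω) [IsProbabilityMeasure μ]
    (P : S → A → S → ℝ) (hP0 : ∀ s a s', 0 ≤ P s a s') (hP1 : ∀ s a, ∑ s', P s a s' = 1)
    (r : S → A → ℝ) (hr : ∀ s a, |r s a| ≤ 1)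
    (γ : ℝ) (hγ : γ ∈ Set.Ioo (0 : ℝ) 1)
    (Qstar : S × A → ℝ) (hQstar : bellman P r γ Qstar = Qstar)
    (T : ℕ) (hT : 1 ≤ T) (Q : ℕ → Ω → S × A → ℝ) (hQmeas : ∀ k, Measurable (Q k))
    (ε : ℝ) (hε0 : 0 ≤ ε)
    (hmomInt : ∀ i ∈ Finset.Icc 1 T,
      Integrable (fun ω => sqNorm (fun x => Q i ω x - bellman P r γ (Q (i - 1) ω) x)) μ)
    (hmom : ∀ i ∈ Finset.Icc 1 T,
      ∫ ω, sqNorm (fun x => Q i ω x - bellman P r γ (Q (i - 1) ω) x) ∂μ ≤ ε)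
    (hint : ∀ k, Integrable (fun ω => (supNorm (fun x => Q k ω x - Qstar x)) ^ 2) μ) :
    ∫ ω, (supNorm (fun x => Q T ω x - Qstar x)) ^ 2 ∂μ ≤
      ((1 + γ ^ 2) / (1 - γ ^ 2)) * ε * (2 / (1 - γ ^ 2))
        + ((γ ^ 2 + 1) / 2) ^ T * ∫ ω, (supNorm (fun x => Q 0 ω x - Qstar x)) ^ 2 ∂μ := by
  have hbellman (R : S × A → ℝ) : dist (bellman P r γ R) Qstar ≤ γ * dist R Qstar := by
    simpa only [hQstar] using dist_bellman_le hP0 hP1 r hγ.1.le R Qstar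
  have hmem {k : ℕ} (hk : k < T) : k + 1 ∈ Finset.Icc 1 T := Finset.mem_Icc.2 ⟨by omega, hk⟩
  simp only [supNorm_sub_eq_dist] at hint ⊢
  exact squared_error_recursion_accumulated_general (pow_lt_one₀ hγ.1.le hγ.2 two_ne_zero)
    hbellman hε0 (fun k _ ω => dist_eq_norm (Q (k + 1) ω) _ ▸ sq_norm_le_sqNorm _)
    (fun k hk => hmomInt (k + 1) (hmem hk)) (fun k hk => hmom (k + 1) (hmem hk))
    fun k _ => hint k
end

section
/- For all functions Q, Q_k : S×A → ℝ, one has Σ_{(s,a,s')} d(s,a)·P s a s' · ‖g(Q; Q_k, (s,a,s'))‖₂² ≤ 4γ²·|S|·‖Q_k − Q*‖_∞² + 4·‖Q − Q*‖_D² + 2σ², where σ² := Σ_{(s,a,s')} d(s,a)·P s a s' · ‖g(Q*; Q*, (s,a,s'))‖₂². -/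
open MeasureTheory ProbabilityTheory Finset

/-- Stochastic gradient for sample `(s,a,s')`: zero except at coordinate `(s,a)`,
where it takes the value `Q(s,a) - r(s,a) - γ·max_{a'} Qk(s',a')`. -/
noncomputable def sgrad {S A : Type*} [Fintype A] [Nonempty A] [DecidableEq S] [DecidableEq A]
    (r : S → A → ℝ) (γ : ℝ) (Q Qk : S × A → ℝ) (smp : S × A × S) : S × A → ℝ :=
  fun x => if x = (smp.1, smp.2.1) then
      Q (smp.1, smp.2.1) - r smp.1 smp.2.1
        - γ * Finset.univ.sup' Finset.univ_nonempty (fun a' => Qk (smp.2.2, a'))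
    else 0

/-- squared `D`-weighted norm. -/
def DnormSq {S A : Type*} [Fintype S] [Fintype A] (d : S × A → ℝ) (f : S × A → ℝ) : ℝ :=
  ∑ x, d x * (f x) ^ 2

/-!
Take a second pair `(Q₀, Qk₀)`, to be specialised to `(Q*, Q*)`. For a single sample `(s, a, s')`,
`g(Q; Qk) - g(Q₀; Qk₀)` is supported at `(s, a)`, with value
`(Q - Q₀) (s, a) - γ * (max Qk (s', ·) - max Qk₀ (s', ·))`. The maximum is 1-Lipschitz for the sup
norm, so two applications of `(x + y)² ≤ 2 (x² + y²)` give a bound whose only term depending on `s'`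
is the squared norm of `g(Q₀; Qk₀)`. Averaging over the sample, `∑ s', P s a s' = 1` removes the
next state from the other two terms. The factor `|S|` comes from `1 ≤ |S|` alone.
-/

theorem abs_le_supNorm {ι : Type*} [Fintype ι] [Nonempty ι] (f : ι → ℝ) (i : ι) :
    |f i| ≤ supNorm f :=
  le_sup' (fun i => |f i|) (mem_univ i)

theorem abs_sup'_sub_sup'_le {ι α : Type*} [AddCommGroup α] [LinearOrder α] [IsOrderedAddMonoid α]
    {s : Finset ι} (hs : s.Nonempty) {f g : ι → α} {c : α} (h : ∀ i ∈ s, |f i - g i| ≤ c) :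
    |s.sup' hs f - s.sup' hs g| ≤ c := by
  rw [abs_sub_le_iff, sub_le_iff_le_add, sub_le_iff_le_add]
  refine ⟨sup'_le hs f fun i hi => ?_, sup'_le hs g fun i hi => ?_⟩
  · exact (sub_le_iff_le_add.1 (abs_sub_le_iff.1 (h i hi)).1).trans
      (add_le_add_right (le_sup' g hi) c)
  · exact (sub_le_iff_le_add.1 (abs_sub_le_iff.1 (h i hi)).2).trans
      (add_le_add_right (le_sup' f hi) c)

theorem sub_add_sq_le {R : Type*} [CommRing R] [LinearOrder R] [IsStrictOrderedRing R]
    (x y z : R) : (x - y + z) ^ 2 ≤ 4 * x ^ 2 + 4 * y ^ 2 + 2 * z ^ 2 :=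
  calc (x - y + z) ^ 2
      ≤ 2 * ((x - y) ^ 2 + z ^ 2) := add_sq_le
    _ ≤ 2 * (2 * (x ^ 2 + y ^ 2) + z ^ 2) := by
      gcongr
      simpa only [← sub_eq_add_neg, neg_sq] using add_sq_le (a := x) (b := -y)
    _ = 4 * x ^ 2 + 4 * y ^ 2 + 2 * z ^ 2 := by ring

section SecondMoment

variable {S A : Type*} [Fintype S] [Fintype A]

theorem abs_sup'_sub_sup'_le_supNorm [Nonempty S] [Nonempty A] (U V : S × A → ℝ) (s : S) :
    |univ.sup' univ_nonempty (fun a => U (s, a)) - univ.sup' univ_nonempty (fun a => V (s, a))| ≤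
      supNorm (fun x => U x - V x) :=
  abs_sup'_sub_sup'_le univ_nonempty fun a _ => abs_le_supNorm (fun x => U x - V x) (s, a)

theorem sqNorm_sgrad [Nonempty A] [DecidableEq S] [DecidableEq A]
    (r : S → A → ℝ) (γ : ℝ) (Q Qk : S × A → ℝ) (s : S) (a : A) (s' : S) :
    sqNorm (sgrad r γ Q Qk (s, a, s')) =
      (Q (s, a) - r s a - γ * univ.sup' univ_nonempty (fun a' => Qk (s', a'))) ^ 2 := by
  simp [sqNorm, sgrad, ite_pow]

theorem sqNorm_sgrad_le [Nonempty S] [Nonempty A] [DecidableEq S] [DecidableEq A]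
    (r : S → A → ℝ) (γ : ℝ) (Q Qk Q₀ Qk₀ : S × A → ℝ) (smp : S × A × S) :
    sqNorm (sgrad r γ Q Qk smp) ≤
      4 * γ ^ 2 * supNorm (fun x => Qk x - Qk₀ x) ^ 2
        + 4 * (Q (smp.1, smp.2.1) - Q₀ (smp.1, smp.2.1)) ^ 2
        + 2 * sqNorm (sgrad r γ Q₀ Qk₀ smp) := by
  obtain ⟨s, a, s'⟩ := smp
  set m := univ.sup' univ_nonempty (fun a' => Qk (s', a'))
  set m₀ := univ.sup' univ_nonempty (fun a' => Qk₀ (s', a'))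
  have target_gap : (m - m₀) ^ 2 ≤ supNorm (fun x => Qk x - Qk₀ x) ^ 2 :=
    sq_le_sq.2 ((abs_sup'_sub_sup'_le_supNorm Qk Qk₀ s').trans (le_abs_self _))
  calc sqNorm (sgrad r γ Q Qk (s, a, s'))
      = (Q (s, a) - r s a - γ * m) ^ 2 := sqNorm_sgrad r γ Q Qk s a s'
    _ = ((Q (s, a) - Q₀ (s, a)) - γ * (m - m₀) + (Q₀ (s, a) - r s a - γ * m₀)) ^ 2 := by ring
    _ ≤ 4 * (Q (s, a) - Q₀ (s, a)) ^ 2 + 4 * (γ * (m - m₀)) ^ 2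
          + 2 * (Q₀ (s, a) - r s a - γ * m₀) ^ 2 := sub_add_sq_le _ _ _
    _ = 4 * γ ^ 2 * (m - m₀) ^ 2 + 4 * (Q (s, a) - Q₀ (s, a)) ^ 2
          + 2 * sqNorm (sgrad r γ Q₀ Qk₀ (s, a, s')) := by
      rw [sqNorm_sgrad]
      ring
    _ ≤ _ := by gcongr

theorem sum_weight_mul_transition_mul {R : Type*} [NonAssocSemiring R]
    {P : S → A → S → R} (hP1 : ∀ s a, ∑ s', P s a s' = 1) (d f : S × A → R) :
    ∑ smp : S × A × S, d (smp.1, smp.2.1) * P smp.1 smp.2.1 smp.2.2 * f (smp.1, smp.2.1) =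
      ∑ x, d x * f x := by
  simp only [Fintype.sum_prod_type, ← sum_mul, ← mul_sum, hP1, mul_one]

theorem sgrad_second_moment_decomposition_general
    [Nonempty S] [Nonempty A] [DecidableEq S] [DecidableEq A]
    {P : S → A → S → ℝ} (hP0 : ∀ s a s', 0 ≤ P s a s') (hP1 : ∀ s a, ∑ s', P s a s' = 1)
    (r : S → A → ℝ) (γ : ℝ) {d : S × A → ℝ} (hd0 : ∀ x, 0 ≤ d x) (hd1 : ∑ x, d x = 1)
    (Q Qk Q₀ Qk₀ : S × A → ℝ) :
    ∑ smp : S × A × S, d (smp.1, smp.2.1) * P smp.1 smp.2.1 smp.2.2 *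
        sqNorm (sgrad r γ Q Qk smp) ≤
      4 * γ ^ 2 * supNorm (fun x => Qk x - Qk₀ x) ^ 2
        + 4 * DnormSq d (fun x => Q x - Q₀ x)
        + 2 * ∑ smp : S × A × S, d (smp.1, smp.2.1) * P smp.1 smp.2.1 smp.2.2 *
            sqNorm (sgrad r γ Q₀ Qk₀ smp) := by
  set w : S × A × S → ℝ := fun smp => d (smp.1, smp.2.1) * P smp.1 smp.2.1 smp.2.2
  set C := 4 * γ ^ 2 * supNorm (fun x => Qk x - Qk₀ x) ^ 2
  set e : S × A → ℝ := fun x => C + 4 * (Q x - Q₀ x) ^ 2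
  have w_nonneg (smp : S × A × S) : 0 ≤ w smp := mul_nonneg (hd0 _) (hP0 _ _ _)
  have sum_e : ∑ x, d x * e x = C + 4 * DnormSq d (fun x => Q x - Q₀ x) := by
    simp only [e, DnormSq, mul_add, sum_add_distrib, ← sum_mul, hd1, one_mul, mul_sum,
      mul_left_comm]
  calc ∑ smp, w smp * sqNorm (sgrad r γ Q Qk smp)
      ≤ ∑ smp, w smp * (e (smp.1, smp.2.1) + 2 * sqNorm (sgrad r γ Q₀ Qk₀ smp)) :=
        sum_le_sum fun smp _ =>
          mul_le_mul_of_nonneg_left (sqNorm_sgrad_le r γ Q Qk Q₀ Qk₀ smp) (w_nonneg smp)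
    _ = ∑ smp, w smp * e (smp.1, smp.2.1) + 2 * ∑ smp, w smp * sqNorm (sgrad r γ Q₀ Qk₀ smp) := by
      simp only [mul_add, sum_add_distrib, mul_sum, mul_left_comm]
    _ = _ := by rw [sum_weight_mul_transition_mul hP1 d e, sum_e]

end SecondMoment

theorem sgrad_second_moment_decomposition
    {S A : Type*} [Fintype S] [Fintype A] [Nonempty S] [Nonempty A]
    [DecidableEq S] [DecidableEq A]
    (P : S → A → S → ℝ) (hP0 : ∀ s a s', 0 ≤ P s a s') (hP1 : ∀ s a, ∑ s', P s a s' = 1)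
    (r : S → A → ℝ) (hr : ∀ s a, |r s a| ≤ 1)
    (γ : ℝ) (hγ : γ ∈ Set.Ioo (0 : ℝ) 1)
    (Qstar : S × A → ℝ) (hQstar : bellman P r γ Qstar = Qstar)
    (d : S × A → ℝ) (hd0 : ∀ x, 0 < d x) (hd1 : ∑ x, d x = 1)
    (Q Qk : S × A → ℝ) :
    ∑ smp : S × A × S, d (smp.1, smp.2.1) * P smp.1 smp.2.1 smp.2.2 *
        sqNorm (sgrad r γ Q Qk smp) ≤
      4 * γ ^ 2 * (Fintype.card S : ℝ) * (supNorm (fun x => Qk x - Qstar x)) ^ 2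
        + 4 * DnormSq d (fun x => Q x - Qstar x)
        + 2 * ∑ smp : S × A × S, d (smp.1, smp.2.1) * P smp.1 smp.2.1 smp.2.2 *
            sqNorm (sgrad r γ Qstar Qstar smp) := by
  have hcard : 4 * γ ^ 2 ≤ 4 * γ ^ 2 * (Fintype.card S : ℝ) :=
    le_mul_of_one_le_right (by positivity) (Nat.one_le_cast.2 Fintype.card_pos)
  exact (sgrad_second_moment_decomposition_general hP0 hP1 r γ (fun x => (hd0 x).le) hd1
    Q Qk Qstar Qstar).trans (by gcongr)
end
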